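/- Suppose a > 0, the L¹-condition ∫₁^∞ |N(x) − a·x| / x² dx < ∞ holds, and there is a constant C such that |N(x) − a·x| ≤ C·x / log x for all x ≥ 2. Then the Chebyshev upper estimate holds: there is a constant B such that π(x) · log x / x ≤ B for all x ≥ 2 (equivalently, limsup_{x→∞} π(x) log x / x < ∞). -/

import Mathlib

open MeasureTheory Real Filter Complex

/-- The generalized integer attached to an exponent vector `α`: `n(α) = ∏ k, (p k)^(α k)`. -/
noncomputable def beurlingInt (p : ℕ → ℝ) (α : ℕ →₀ ℕ) : ℝ :=
  α.prod fun k e => (p k) ^ e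

/-- Counting function of generalized integers: `N(x) = #{α : n(α) < x}`. -/
noncomputable def beurlingN (p : ℕ → ℝ) (x : ℝ) : ℕ :=
  Set.ncard {α : ℕ →₀ ℕ | beurlingInt p α < x}

/-- Counting function of generalized primes: `π(x) = #{k : p k < x}`. -/
noncomputable def beurlingPi (p : ℕ → ℝ) (x : ℝ) : ℕ :=
  Set.ncard {k : ℕ | p k < x}

/-!
Count `n(α) < x` with weight `log n(α)` in two ways. With `N(x) = a x + O(x / log x)` this gives
Chebyshev's identity `∑_{p_k^j < x} log p_k · N(x / p_k^j) = a x log x + O(x)`. Put `x = exp u` and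
divide by `x`: the measure with mass `log p_k / p_k^j` at the point `log p_k^j`, convolved with the
kernel `K(w) = N(exp w) / exp w` on `w > 0`, equals `a max(u, 0) + O(1)`.

Such a measure has bounded mass on windows of fixed length, provided `E = K - a` is integrable.
Write `Ψ(u)` for its mass below `u`, so that `a Ψ(u) = a max(u, 0) + O(1) - (E * dΨ)(u)`. Averaging
an increment of this relation over a window of length `h` bounds the mass `ω(y)` of `[y, y + h)` by
`O(1) + (2 ‖E‖₁ / (a h)) · sup_{z ≤ y + h} ω(z)`. Once `h ≥ 4 ‖E‖₁ / a`, the last term is at most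
half of the supremum; since `ω` grows at most linearly, iterating along `y, y + h, y + 2h, …` gives
`ω = O(1)`. Windows of length `log 2` then give `θ(x) - θ(x / 2) = O(x)`, hence `θ(x) = O(x)` and
the bound for `π`.
-/

open scoped Topology

section Sublevel

variable {ι R : Type*} [LinearOrder R] {f : ι → R} {x y s t : R} {i : ι}

/-- The indices with `f i < x`, as a finset; for `f = beurlingInt p` and `f = p` these are the sets
counted by `beurlingN` and `beurlingPi`. Finiteness for every `x` is encoded as
`Tendsto f cofinite atTop`. -/
noncomputable def sublevelFinset (hf : Tendsto f cofinite atTop) (x : R) : Finset ι :=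
  (eventually_cofinite.1 (hf.eventually_ge_atTop x)).toFinset

@[simp]
lemma mem_sublevelFinset (hf : Tendsto f cofinite atTop) : i ∈ sublevelFinset hf x ↔ f i < x := by
  simp [sublevelFinset]

/-- The indices with `s ≤ f i < t`, as a finset. -/
noncomputable def windowFinset (hf : Tendsto f cofinite atTop) (s t : R) : Finset ι :=
  (sublevelFinset hf t).filter (s ≤ f ·)

@[simp]
lemma mem_windowFinset (hf : Tendsto f cofinite atTop) :
    i ∈ windowFinset hf s t ↔ s ≤ f i ∧ f i < t := by
  simp [windowFinset, and_comm]

lemma sublevelFinset_mono (hf : Tendsto f cofinite atTop) : Monotone (sublevelFinset hf) := by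
  intro x y hxy i
  simpa using fun hi : f i < x => hi.trans_le hxy

lemma sum_sublevelFinset_add_sum_windowFinset (hf : Tendsto f cofinite atTop) (hst : s ≤ t)
    {M : Type*} [AddCommMonoid M] (g : ι → M) :
    ∑ i ∈ sublevelFinset hf s, g i + ∑ i ∈ windowFinset hf s t, g i =
      ∑ i ∈ sublevelFinset hf t, g i := by
  rw [← Finset.sum_filter_not_add_sum_filter (sublevelFinset hf t) (s ≤ f ·), windowFinset]
  congr 2
  ext i
  simpa using fun hi : f i < s => hi.trans_le hst

lemma ncard_setOf_lt (hf : Tendsto f cofinite atTop) (x : R) :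
    {i | f i < x}.ncard = (sublevelFinset hf x).card := by
  rw [← Set.ncard_coe_finset]
  congr 1
  ext i
  simp

end Sublevel

section Dyadic

lemma le_two_mul_of_le_half_add {f : ℝ → ℝ} {B x : ℝ} (hB : 0 ≤ B)
    (hf_one : ∀ y, 0 < y → y ≤ 1 → f y ≤ 0) (hf : ∀ y, 0 < y → f y ≤ f (y / 2) + B * y)
    (hx : 0 < x) : f x ≤ 2 * B * x := by
  have of_le_two_pow (m : ℕ) : ∀ y, 0 < y → y ≤ 2 ^ m → f y ≤ 2 * B * y := by
    induction m with
    | zero =>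
      intro y hy hy1
      exact (hf_one y hy (by simpa using hy1)).trans (by positivity)
    | succ m ih =>
      intro y hy hym
      linarith [hf y hy, ih (y / 2) (by linarith) (by rw [pow_succ] at hym; linarith)]
  obtain ⟨m, hm⟩ := pow_unbounded_of_one_lt x one_lt_two
  exact of_le_two_pow m x hx hm.le

lemma le_two_mul_of_le_add_half {ω G : ℝ → ℝ} {A h : ℝ} (hA : 0 ≤ A) (hωG : ∀ y, ω y ≤ G y)
    (hG : Monotone G) (hlim : ∀ y, Tendsto (fun n : ℕ => G (y + n * h) / 2 ^ n) atTop (𝓝 0))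
    (hstep : ∀ y M, (∀ z ≤ y + h, ω z ≤ M) → ω y ≤ A + M / 2) (y : ℝ) : ω y ≤ 2 * A := by
  have iterate (n : ℕ) : ∀ y, ω y ≤ 2 * A + G (y + n * h) / 2 ^ n := by
    induction n with
    | zero =>
      intro y
      simpa using (hωG y).trans (le_add_of_nonneg_left (by positivity))
    | succ n ih =>
      intro y
      have hle : ∀ z ≤ y + h, ω z ≤ 2 * A + G (y + (n + 1 : ℕ) * h) / 2 ^ n := by
        intro z hz
        refine (ih z).trans ?_
        gcongr
        apply hG
        push_cast
        linarith
      refine (hstep y _ hle).trans_eq ?_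
      rw [pow_succ]
      ring
  simpa using ge_of_tendsto' ((hlim y).const_add (2 * A)) (iterate · y)

lemma tendsto_add_mul_max_div_two_pow (r s y h : ℝ) :
    Tendsto (fun n : ℕ => (r + s * max (y + n * h) 0) / 2 ^ n) atTop (𝓝 0) := by
  have hconst (b : ℝ) : Tendsto (fun n : ℕ => b / 2 ^ n) atTop (𝓝 0) :=
    (tendsto_pow_atTop_atTop_of_one_lt one_lt_two).const_div_atTop b
  have hlinear : Tendsto (fun n : ℕ => (y + n * h) / 2 ^ n) atTop (𝓝 0) := by
    have hself := tendsto_pow_const_div_const_pow_of_one_lt 1 (one_lt_two (α := ℝ))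
    have hsum := (hconst y).add (hself.mul_const h)
    simp only [zero_mul, add_zero] at hsum
    exact hsum.congr fun n => by ring
  have hsum := (hconst r).add ((hlinear.max (tendsto_const_nhds (x := (0 : ℝ)))).const_mul s)
  simp only [max_self, mul_zero, add_zero] at hsum
  refine hsum.congr fun n => ?_
  have hmax : max ((y + n * h) / 2 ^ n) 0 = max (y + n * h) 0 / 2 ^ n := by
    rw [← max_div_div_right (by positivity), zero_div]
  rw [hmax, add_div, mul_div_assoc]

end Dyadic

section Renewal

lemma setIntegral_Ico_comp_sub {F : Type*} [NormedAddCommGroup F] [NormedSpace ℝ F] (f : ℝ → F)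
    (s t d : ℝ) :
    ∫ w in Set.Ico s t, f (w - d) = ∫ w in Set.Ico (s - d) (t - d), f w := by
  have := (measurePreserving_sub_right volume d).setIntegral_preimage_emb
    (MeasurableEquiv.subRight d).measurableEmbedding f (Set.Ico (s - d) (t - d))
  simpa using this

variable {ι : Type*} {v c : ι → ℝ}

lemma setIntegral_abs_sum_mul_comp_sub_le {S : Finset ι} (hc : ∀ i ∈ S, 0 ≤ c i) {E : ℝ → ℝ}
    (hE : Integrable E) (hE_nonpos : ∀ s ≤ 0, E s = 0) {u h M : ℝ}
    (hM : ∀ y < u, ∑ i ∈ S with v i ∈ Set.Ico y (y + h), c i ≤ M) :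
    ∫ w in Set.Ico u (u + h), |∑ i ∈ S, c i * E (w - v i)| ≤ M * ∫ s, |E s| := by
  have hint (i : ι) : Integrable fun w => c i * E (w - v i) :=
    (hE.comp_sub_right (v i)).const_mul _
  have hint_abs (i : ι) : Integrable fun w => c i * |E (w - v i)| :=
    (hE.comp_sub_right (v i)).abs.const_mul _
  have hwindow (i : ι) :
      Integrable fun s => c i * (Set.Ico (u - v i) (u + h - v i)).indicator (|E ·|) s :=
    (hE.abs.indicator measurableSet_Ico).const_mul _
  calc ∫ w in Set.Ico u (u + h), |∑ i ∈ S, c i * E (w - v i)|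
      ≤ ∫ w in Set.Ico u (u + h), ∑ i ∈ S, c i * |E (w - v i)| := by
        refine setIntegral_mono (integrable_finsetSum S fun i _ => hint i).abs.integrableOn
          (integrable_finsetSum S fun i _ => hint_abs i).integrableOn fun w => ?_
        refine (Finset.abs_sum_le_sum_abs _ _).trans_eq (Finset.sum_congr rfl fun i hi => ?_)
        rw [abs_mul, abs_of_nonneg (hc i hi)]
    _ = ∑ i ∈ S, c i * ∫ s in Set.Ico (u - v i) (u + h - v i), |E s| := by
        rw [integral_finsetSum S fun i _ => (hint_abs i).integrableOn]
        simp only [integral_const_mul, setIntegral_Ico_comp_sub (|E ·|)]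
    _ = ∫ s, ∑ i ∈ S, c i * (Set.Ico (u - v i) (u + h - v i)).indicator (|E ·|) s := by
        rw [integral_finsetSum S fun i _ => hwindow i]
        simp only [integral_const_mul, integral_indicator measurableSet_Ico]
    _ ≤ ∫ s, M * |E s| := by
        refine integral_mono (integrable_finsetSum S fun i _ => hwindow i)
          (hE.abs.const_mul M) fun s => ?_
        rcases le_or_gt s 0 with hs | hs
        · simp [Set.indicator_apply, hE_nonpos s hs]
        refine le_trans (le_of_eq ?_)
          (mul_le_mul_of_nonneg_right (hM (u - s) (by linarith)) (abs_nonneg (E s)))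
        rw [Finset.sum_filter, Finset.sum_mul]
        refine Finset.sum_congr rfl fun i _ => ?_
        have hmem : s ∈ Set.Ico (u - v i) (u + h - v i) ↔ v i ∈ Set.Ico (u - s) (u - s + h) := by
          simp only [Set.mem_Ico]
          constructor <;> rintro ⟨_, _⟩ <;> constructor <;> linarith
        simp [Set.indicator_apply, hmem]
    _ = M * ∫ s, |E s| := integral_const_mul _ _

/-- The convolution `∑_{v i < w} c i * K (w - v i)` of the weighted points `(v i, c i)` with the
restriction of the kernel `K` to `(0, ∞)`. -/
noncomputable def sublevelConv (hv : Tendsto v cofinite atTop) (c : ι → ℝ) (K : ℝ → ℝ) (w : ℝ) :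
    ℝ :=
  ∑ i ∈ sublevelFinset hv w, c i * K (w - v i)

variable (hv : Tendsto v cofinite atTop) {E : ℝ → ℝ} {a C h u w M : ℝ}

lemma sublevelConv_eq_sum_indicator {X : ℝ} (hw : w ≤ X) :
    sublevelConv hv c E w =
      ∑ i ∈ sublevelFinset hv X, c i * (Set.Ioi 0).indicator E (w - v i) := by
  refine Eq.trans (Finset.sum_congr rfl fun i hi => ?_)
    (Finset.sum_subset (sublevelFinset_mono hv hw) fun i _ hi => ?_)
  · rw [mem_sublevelFinset] at hi
    rw [Set.indicator_of_mem (by simpa using hi)]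
  · rw [mem_sublevelFinset] at hi
    rw [Set.indicator_of_notMem (by simpa using hi), mul_zero]

lemma sublevelConv_const_add :
    sublevelConv hv c (fun s => a + E s) w =
      a * ∑ i ∈ sublevelFinset hv w, c i + sublevelConv hv c E w := by
  simp only [sublevelConv, mul_add, Finset.sum_add_distrib, ← Finset.sum_mul, mul_comm a]

lemma integrableOn_sublevelConv_comp_add (hE : IntegrableOn E (Set.Ioi 0)) (s t d : ℝ) :
    IntegrableOn (fun w => sublevelConv hv c E (w + d)) (Set.Ico s t) := by
  have hint : Integrable fun w => ∑ i ∈ sublevelFinset hv (t + d),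
      c i * (Set.Ioi 0).indicator E (w - v i) :=
    integrable_finsetSum _ fun i _ =>
      (((integrable_indicator_iff measurableSet_Ioi).2 hE).comp_sub_right (v i)).const_mul _
  refine (hint.comp_add_right d).integrableOn.congr_fun (fun w hw => ?_) measurableSet_Ico
  exact (sublevelConv_eq_sum_indicator hv (by linarith [hw.2])).symm

lemma setIntegral_abs_sublevelConv_le (hc : ∀ i, 0 ≤ c i) (hE : IntegrableOn E (Set.Ioi 0))
    (hM : ∀ y < u, ∑ i ∈ windowFinset hv y (y + h), c i ≤ M) :
    ∫ w in Set.Ico u (u + h), |sublevelConv hv c E w| ≤ M * ∫ s in Set.Ioi 0, |E s| := by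
  have hnorm : ∫ s in Set.Ioi 0, |E s| = ∫ s, |(Set.Ioi 0).indicator E s| := by
    rw [← integral_indicator measurableSet_Ioi]
    congr 1 with s
    by_cases hs : s ∈ Set.Ioi 0 <;> simp [hs]
  rw [hnorm, setIntegral_congr_fun measurableSet_Ico fun w hw =>
    congrArg abs (sublevelConv_eq_sum_indicator hv hw.2.le)]
  refine setIntegral_abs_sum_mul_comp_sub_le (fun i _ => hc i)
    ((integrable_indicator_iff measurableSet_Ioi).2 hE)
    (fun s hs => Set.indicator_of_notMem (by simpa using hs) _) fun y hy => ?_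
  refine (Finset.sum_le_sum_of_subset_of_nonneg ?_ fun i _ _ => hc i).trans (hM y hy)
  intro i
  simp

-- Since `w < u + h ≤ u + 2 * h ≤ w + 2 * h`, the mass of `[u + h, u + 2 * h)` is at most the
-- increment of the total mass from `w` to `w + 2 * h`; `hconv` controls that increment up to the
-- contribution of `E`.
lemma mul_sum_windowFinset_le_abs_add_abs (hc : ∀ i, 0 ≤ c i) (ha : 0 ≤ a) (hh : 0 ≤ h)
    (hconv : ∀ u, |sublevelConv hv c (fun s => a + E s) u - a * max u 0| ≤ C)
    (hw : w ∈ Set.Ico u (u + h)) :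
    a * ∑ i ∈ windowFinset hv (u + h) (u + h + h), c i ≤
      2 * C + 2 * a * h + (|sublevelConv hv c E (w + 2 * h)| + |sublevelConv hv c E w|) := by
  have hmono : Monotone fun x => ∑ i ∈ sublevelFinset hv x, c i := fun x y hxy =>
    Finset.sum_le_sum_of_subset_of_nonneg (sublevelFinset_mono hv hxy) fun i _ _ => hc i
  have hwindow : ∑ i ∈ windowFinset hv (u + h) (u + h + h), c i ≤
      ∑ i ∈ sublevelFinset hv (w + 2 * h), c i - ∑ i ∈ sublevelFinset hv w, c i := by
    have hsplit := sum_sublevelFinset_add_sum_windowFinset hv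
      (show u + h ≤ u + h + h by linarith) c
    linarith [hmono (show u + h + h ≤ w + 2 * h by linarith [hw.1]), hmono hw.2.le]
  have hmax : max (w + 2 * h) 0 ≤ max w 0 + 2 * h :=
    max_le (by linarith [le_max_left w 0]) (by linarith [le_max_right w 0])
  have hupper := (abs_le.1 (hconv (w + 2 * h))).2
  have hlower := (abs_le.1 (hconv w)).1
  rw [sublevelConv_const_add] at hupper hlower
  linarith [mul_le_mul_of_nonneg_left hwindow ha, mul_le_mul_of_nonneg_left hmax ha,
    neg_abs_le (sublevelConv hv c E (w + 2 * h)), le_abs_self (sublevelConv hv c E w)]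

lemma mul_sum_windowFinset_le_of_forall_le (hc : ∀ i, 0 ≤ c i) (hE : IntegrableOn E (Set.Ioi 0))
    (ha : 0 ≤ a) (hh : 0 ≤ h)
    (hconv : ∀ u, |sublevelConv hv c (fun s => a + E s) u - a * max u 0| ≤ C)
    (hM : ∀ y ≤ u + h, ∑ i ∈ windowFinset hv y (y + h), c i ≤ M) :
    h * (a * ∑ i ∈ windowFinset hv u (u + h), c i) ≤
      h * (2 * C + 2 * a * h) + 2 * (M * ∫ s in Set.Ioi 0, |E s|) := by
  obtain ⟨u, rfl⟩ : ∃ u', u = u' + h := ⟨u - h, by ring⟩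
  set q := sublevelConv hv c E
  have hq : IntegrableOn (fun w => |q w|) (Set.Ico u (u + h)) := by
    simpa only [add_zero] using! (integrableOn_sublevelConv_comp_add hv hE u (u + h) 0).abs
  have hq_shift : IntegrableOn (fun w => |q (w + 2 * h)|) (Set.Ico u (u + h)) :=
    (integrableOn_sublevelConv_comp_add hv hE _ _ _).abs
  have hint_shift : ∫ w in Set.Ico u (u + h), |q (w + 2 * h)| ≤ M * ∫ s in Set.Ioi 0, |E s| := by
    have htranslate := setIntegral_Ico_comp_sub (|q ·|) u (u + h) (-(2 * h))
    simp only [sub_neg_eq_add, add_right_comm u h] at htranslate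
    rw [htranslate]
    exact setIntegral_abs_sublevelConv_le hv hc hE fun y hy => hM y (by linarith)
  have hint : ∫ w in Set.Ico u (u + h), |q w| ≤ M * ∫ s in Set.Ioi 0, |E s| :=
    setIntegral_abs_sublevelConv_le hv hc hE fun y hy => hM y (by linarith)
  have hconst (r : ℝ) : ∫ _ in Set.Ico u (u + h), r = h * r := by simp [hh]
  calc h * (a * ∑ i ∈ windowFinset hv (u + h) (u + h + h), c i)
      = ∫ _ in Set.Ico u (u + h), a * ∑ i ∈ windowFinset hv (u + h) (u + h + h), c i :=
        (hconst _).symm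
    _ ≤ ∫ w in Set.Ico u (u + h), (2 * C + 2 * a * h + (|q (w + 2 * h)| + |q w|)) :=
        setIntegral_mono_on (integrableOn_const (by simp))
          ((integrableOn_const (by simp)).add (hq_shift.add hq)) measurableSet_Ico
          fun w hw => mul_sum_windowFinset_le_abs_add_abs hv hc ha hh hconv hw
    _ = h * (2 * C + 2 * a * h) +
          ((∫ w in Set.Ico u (u + h), |q (w + 2 * h)|) + ∫ w in Set.Ico u (u + h), |q w|) := by
        rw [← integral_add hq_shift hq, ← hconst]
        exact integral_add (integrable_const _) (hq_shift.add hq)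
    _ ≤ h * (2 * C + 2 * a * h) + 2 * (M * ∫ s in Set.Ioi 0, |E s|) := by linarith

lemma mul_sum_windowFinset_le_of_forall_kernel_ge (hc : ∀ i, 0 ≤ c i) {K : ℝ → ℝ} {δ : ℝ}
    (hK : ∀ s > 0, 0 ≤ K s) (hδ : ∀ s ∈ Set.Ioc 0 h, δ ≤ K s) (y : ℝ) :
    δ * ∑ i ∈ windowFinset hv y (y + h), c i ≤ sublevelConv hv c K (y + h) := by
  rw [Finset.mul_sum]
  refine (Finset.sum_le_sum fun i hi => ?_).trans
    (Finset.sum_le_sum_of_subset_of_nonneg (Finset.filter_subset _ _) fun i hi _ => ?_)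
  · rw [mem_windowFinset] at hi
    rw [mul_comm]
    exact mul_le_mul_of_nonneg_left (hδ _ ⟨by linarith, by linarith⟩) (hc i)
  · rw [mem_sublevelFinset] at hi
    exact mul_nonneg (hc i) (hK _ (by linarith))

-- `4 * ∫ |E| ≤ a * h` is the choice of `h` that turns the coefficient of `M` into `1 / 2`.
lemma sum_windowFinset_le_add_half (hc : ∀ i, 0 ≤ c i) (hE : IntegrableOn E (Set.Ioi 0))
    (ha : 0 < a) (hh : 0 < h) (hEh : 4 * ∫ s in Set.Ioi 0, |E s| ≤ a * h)
    (hconv : ∀ u, |sublevelConv hv c (fun s => a + E s) u - a * max u 0| ≤ C)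
    (hM : ∀ y ≤ u + h, ∑ i ∈ windowFinset hv y (y + h), c i ≤ M) :
    ∑ i ∈ windowFinset hv u (u + h), c i ≤ (2 * C + 2 * a * h) / a + M / 2 := by
  have hM0 : 0 ≤ M := (Finset.sum_nonneg fun i _ => hc i).trans (hM u (by linarith))
  have hcancel : h * (a * ((2 * C + 2 * a * h) / a + M / 2)) =
      h * (2 * C + 2 * a * h) + a * h * M / 2 := by
    field_simp
  refine le_of_mul_le_mul_left (a := h * a) ?_ (by positivity)
  linarith [mul_sum_windowFinset_le_of_forall_le hv hc hE ha.le hh.le hconv hM,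
    mul_le_mul_of_nonneg_right hEh hM0]

theorem exists_forall_sum_windowFinset_le (hc : ∀ i, 0 ≤ c i) {K : ℝ → ℝ} (ha : 0 < a)
    (hK : IntegrableOn (fun s => K s - a) (Set.Ioi 0))
    (hKpos : ∀ L, ∃ δ > 0, ∀ s ∈ Set.Ioc 0 L, δ ≤ K s)
    (hconv : ∀ u, |sublevelConv hv c K u - a * max u 0| ≤ C) (ℓ : ℝ) :
    ∃ B, ∀ y, ∑ i ∈ windowFinset hv y (y + ℓ), c i ≤ B := by
  obtain ⟨h, hh, hℓh, hKh⟩ :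
      ∃ h, 0 < h ∧ ℓ ≤ h ∧ 4 * ∫ s in Set.Ioi 0, |K s - a| ≤ a * h := by
    refine ⟨max (max 1 ℓ) (4 * (∫ s in Set.Ioi 0, |K s - a|) / a), by simp, by simp, ?_⟩
    rw [← div_le_iff₀' ha]
    exact le_max_right _ _
  obtain ⟨δ, hδ0, hδ⟩ := hKpos h
  have hK0 (s : ℝ) (hs : s > 0) : 0 ≤ K s := by
    obtain ⟨δ', hδ'0, hδ'⟩ := hKpos s
    exact hδ'0.le.trans (hδ' s ⟨hs, le_rfl⟩)
  have hC : 0 ≤ C := (abs_nonneg _).trans (hconv 0)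
  have hgrowth (y : ℝ) :
      ∑ i ∈ windowFinset hv y (y + h), c i ≤ C / δ + a / δ * max (y + h) 0 := by
    rw [div_mul_eq_mul_div, ← add_div, le_div_iff₀' hδ0]
    linarith [mul_sum_windowFinset_le_of_forall_kernel_ge hv hc hK0 hδ y,
      (abs_le.1 (hconv (y + h))).2]
  have hgrowth_mono : Monotone fun y => C / δ + a / δ * max (y + h) 0 := by
    intro x y hxy
    dsimp only
    gcongr
  have hwindow (y : ℝ) :
      ∑ i ∈ windowFinset hv y (y + h), c i ≤ 2 * ((2 * C + 2 * a * h) / a) := by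
    refine le_two_mul_of_le_add_half (h := h) (by positivity) hgrowth hgrowth_mono (fun y => ?_)
      (fun y M hM => ?_) y
    · simpa only [add_right_comm y] using tendsto_add_mul_max_div_two_pow (C / δ) (a / δ) (y + h) h
    · exact sum_windowFinset_le_add_half hv hc hK ha hh hKh
        (by simpa only [add_sub_cancel] using hconv) hM
  refine ⟨2 * ((2 * C + 2 * a * h) / a), fun y => ?_⟩
  refine (Finset.sum_le_sum_of_subset_of_nonneg ?_ fun i _ _ => hc i).trans (hwindow y)
  intro i
  simpa using fun hy hi => ⟨hy, by linarith⟩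

end Renewal

section SumLog

lemma exists_forall_abs_sub_mul_log_le {F : ℝ → ℝ} {a C : ℝ} (hF : Monotone F) (hF_one : F 1 = 0)
    (hO : ∀ x, 2 ≤ x → |F x - a * x| ≤ C * x / Real.log x) :
    ∃ C', ∀ x, 1 ≤ x → |F x - a * x| * Real.log x ≤ C' * x := by
  have hF0 {x : ℝ} (hx : 1 ≤ x) : 0 ≤ F x := hF_one ▸ hF hx
  refine ⟨max (F 2 + |a|) C, fun x hx => ?_⟩
  rcases le_total x 2 with hx2 | hx2
  · calc |F x - a * x| * Real.log x
        ≤ |F x - a * x| * 1 := by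
          gcongr
          linarith [Real.log_le_sub_one_of_pos (by linarith : 0 < x)]
      _ ≤ F x + |a| * x := by
          rw [mul_one]
          refine (abs_sub _ _).trans_eq ?_
          rw [abs_of_nonneg (hF0 hx), abs_mul, abs_of_nonneg (by linarith : 0 ≤ x)]
      _ ≤ F 2 * x + |a| * x := by
          gcongr
          exact (hF hx2).trans (le_mul_of_one_le_right (hF0 one_le_two) hx)
      _ ≤ max (F 2 + |a|) C * x := by
          rw [← add_mul]
          gcongr
          exact le_max_left _ _
  · have hlog : 0 < Real.log x := Real.log_pos (by linarith)
    refine ((le_div_iff₀ hlog).1 (hO x hx2)).trans ?_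
    gcongr
    exact le_max_right _ _

lemma exists_forall_le_mul {F : ℝ → ℝ} {a C : ℝ} (hF : Monotone F) (hF_one : F 1 = 0)
    (hO : ∀ x, 2 ≤ x → |F x - a * x| ≤ C * x / Real.log x) :
    ∃ D ≥ 0, ∀ x > 0, F x ≤ D * x := by
  have hF2 : 0 ≤ F 2 := hF_one ▸ hF one_le_two
  refine ⟨max (F 2) (a + |C| / Real.log 2), hF2.trans (le_max_left _ _), fun x hx => ?_⟩
  rcases le_total x 1 with hx1 | hx1
  · exact (hF hx1).trans (hF_one.trans_le (by positivity))
  rcases le_total x 2 with hx2 | hx2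
  · calc F x ≤ F 2 * x := (hF hx2).trans (le_mul_of_one_le_right hF2 hx1)
      _ ≤ max (F 2) (a + |C| / Real.log 2) * x := by
        gcongr
        exact le_max_left _ _
  · calc F x ≤ a * x + C * x / Real.log x := by linarith [(abs_le.1 (hO x hx2)).2]
      _ ≤ a * x + |C| * x / Real.log 2 := by
        gcongr
        exact le_abs_self C
      _ = (a + |C| / Real.log 2) * x := by ring
      _ ≤ max (F 2) (a + |C| / Real.log 2) * x := by
        gcongr
        exact le_max_right _ _

variable {ι : Type*} {f : ι → ℝ} (hf : Tendsto f cofinite atTop)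

lemma card_sublevelFinset_mono : Monotone fun x => ((sublevelFinset hf x).card : ℝ) :=
  fun _ _ hxy => Nat.cast_le.2 (Finset.card_le_card (sublevelFinset_mono hf hxy))

lemma sublevelFinset_eq_empty {m x : ℝ} (hm : ∀ i, m ≤ f i) (hx : x ≤ m) :
    sublevelFinset hf x = ∅ :=
  Finset.eq_empty_of_forall_notMem fun i hi =>
    (((mem_sublevelFinset hf).1 hi).trans_le hx).not_ge (hm i)

lemma sum_log_sub_log_le_half_add {y : ℝ} (hy : 0 < y) :
    ∑ i ∈ sublevelFinset hf y, (Real.log y - Real.log (f i)) ≤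
      ∑ i ∈ sublevelFinset hf (y / 2), (Real.log (y / 2) - Real.log (f i)) +
        (sublevelFinset hf y).card * Real.log 2 := by
  have hlog_half : Real.log (y / 2) = Real.log y - Real.log 2 :=
    Real.log_div hy.ne' two_ne_zero
  rw [← nsmul_eq_mul, ← Finset.sum_const, ← sub_le_iff_le_add, ← Finset.sum_sub_distrib,
    ← sum_sublevelFinset_add_sum_windowFinset hf (half_le_self hy.le), hlog_half]
  refine (add_le_add (Finset.sum_le_sum fun i _ => le_of_eq (by ring))
    (Finset.sum_nonpos fun i hi => ?_)).trans_eq (add_zero _)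
  rw [mem_windowFinset] at hi
  linarith [Real.log_le_log (half_pos hy) hi.1]

lemma sum_log_sub_log_le (hf1 : ∀ i, 1 ≤ f i) {D x : ℝ} (hD0 : 0 ≤ D)
    (hD : ∀ y > 0, (sublevelFinset hf y).card ≤ D * y) (hx : 0 < x) :
    ∑ i ∈ sublevelFinset hf x, (Real.log x - Real.log (f i)) ≤ 2 * (D * Real.log 2) * x := by
  refine le_two_mul_of_le_half_add
    (f := fun x => ∑ i ∈ sublevelFinset hf x, (Real.log x - Real.log (f i)))
    (mul_nonneg hD0 (Real.log_nonneg one_le_two)) (fun y _ hy1 => ?_) (fun y hy => ?_) hx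
  · simp [sublevelFinset_eq_empty hf hf1 hy1]
  · refine (sum_log_sub_log_le_half_add hf hy).trans ?_
    rw [mul_right_comm]
    gcongr
    exact hD y hy

theorem exists_forall_abs_sum_log_sub_le (hf1 : ∀ i, 1 ≤ f i) {a C : ℝ}
    (hO : ∀ x, 2 ≤ x → |(sublevelFinset hf x).card - a * x| ≤ C * x / Real.log x) :
    ∃ C', ∀ x, 1 ≤ x →
      |∑ i ∈ sublevelFinset hf x, Real.log (f i) - a * x * Real.log x| ≤ C' * x := by
  have hone : ((sublevelFinset hf 1).card : ℝ) = 0 := by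
    simp [sublevelFinset_eq_empty hf hf1 le_rfl]
  obtain ⟨C', hC'⟩ := exists_forall_abs_sub_mul_log_le (card_sublevelFinset_mono hf) hone hO
  obtain ⟨D, hD0, hD⟩ := exists_forall_le_mul (card_sublevelFinset_mono hf) hone hO
  refine ⟨C' + 2 * (D * Real.log 2), fun x hx => ?_⟩
  have hx0 : 0 < x := by linarith
  set R := ∑ i ∈ sublevelFinset hf x, (Real.log x - Real.log (f i))
  have hR0 : 0 ≤ R := Finset.sum_nonneg fun i hi => sub_nonneg.2 <|
    Real.log_le_log (zero_lt_one.trans_le (hf1 i)) ((mem_sublevelFinset hf).1 hi).le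
  have hR : |R| ≤ 2 * (D * Real.log 2) * x :=
    (abs_of_nonneg hR0).trans_le (sum_log_sub_log_le hf hf1 hD0 hD hx0)
  have hsplit : ∑ i ∈ sublevelFinset hf x, Real.log (f i) - a * x * Real.log x =
      ((sublevelFinset hf x).card - a * x) * Real.log x - R := by
    simp only [R, Finset.sum_sub_distrib, Finset.sum_const, nsmul_eq_mul]
    ring
  have hmain : |((sublevelFinset hf x).card - a * x) * Real.log x| ≤ C' * x := by
    rw [abs_mul, abs_of_nonneg (Real.log_nonneg hx)]
    exact hC' x hx
  rw [hsplit, add_mul]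
  exact (abs_sub _ _).trans (add_le_add hmain hR)

end SumLog

section Beurling

variable {p : ℕ → ℝ} {x : ℝ}

lemma beurlingInt_single (k e : ℕ) : beurlingInt p (Finsupp.single k e) = p k ^ e :=
  Finsupp.prod_single_index (pow_zero _)

lemma beurlingInt_add (α β : ℕ →₀ ℕ) :
    beurlingInt p (α + β) = beurlingInt p α * beurlingInt p β :=
  Finsupp.prod_add_index' (fun _ => pow_zero _) fun _ => pow_add _

lemma one_le_beurlingInt (hp : ∀ k, 1 ≤ p k) (α : ℕ →₀ ℕ) : 1 ≤ beurlingInt p α :=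
  Finset.one_le_prod fun k _ => one_le_pow₀ (hp k)

lemma pow_le_beurlingInt (hp : ∀ k, 1 ≤ p k) (α : ℕ →₀ ℕ) (k : ℕ) :
    p k ^ α k ≤ beurlingInt p α := by
  nth_rw 2 [← Finsupp.single_add_erase k α]
  rw [beurlingInt_add, beurlingInt_single]
  exact le_mul_of_one_le_right (pow_nonneg (zero_le_one.trans (hp k)) _) (one_le_beurlingInt hp _)

lemma log_beurlingInt (hp : ∀ k, p k ≠ 0) (α : ℕ →₀ ℕ) :
    Real.log (beurlingInt p α) = α.sum fun k e => e * Real.log (p k) := by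
  rw [beurlingInt, Finsupp.prod, Real.log_prod fun k _ => pow_ne_zero _ (hp k)]
  simp [Finsupp.sum]

lemma exists_one_lt_forall_le (hp : ∀ k, 1 < p k) (hptop : Tendsto p cofinite atTop) :
    ∃ m > 1, ∀ k, m ≤ p k := by
  obtain ⟨k₀, hk₀⟩ := hptop.exists_forall_le
  exact ⟨p k₀, hp k₀, hk₀⟩

theorem tendsto_beurlingInt_cofinite (hp : ∀ k, 1 < p k) (hptop : Tendsto p cofinite atTop) :
    Tendsto (beurlingInt p) cofinite atTop := by
  obtain ⟨m, hm1, hm⟩ := exists_one_lt_forall_le hp hptop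
  have hp1 (k : ℕ) : 1 ≤ p k := (hp k).le
  refine tendsto_atTop.2 fun x => eventually_cofinite.2 ?_
  obtain ⟨e, he⟩ := pow_unbounded_of_one_lt x hm1
  refine ((sublevelFinset hptop x).finsupp fun _ => Finset.range e).finite_toSet.subset ?_
  intro α hα
  have hlt (k : ℕ) : p k ^ α k < x := (pow_le_beurlingInt hp1 α k).trans_lt (not_le.1 hα)
  refine Finset.mem_finsupp_iff.2 ⟨fun k hk => ?_, fun k _ => Finset.mem_range.2 ?_⟩
  · rw [mem_sublevelFinset]
    exact (le_self_pow₀ (hp1 k) (Finsupp.mem_support_iff.1 hk)).trans_lt (hlt k)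
  · refine (pow_lt_pow_iff_right₀ hm1).1 (lt_trans ?_ he)
    exact (pow_le_pow_left₀ (zero_le_one.trans hm1.le) (hm k) _).trans_lt (hlt k)

/-- The generalized prime power `(p k)^(j + 1)`, indexed by the pair `(k, j)`; the shift makes every
index a genuine prime power. -/
noncomputable def beurlingPrimePow (p : ℕ → ℝ) (i : ℕ × ℕ) : ℝ :=
  p i.1 ^ (i.2 + 1)

lemma beurlingPrimePow_eq_beurlingInt (i : ℕ × ℕ) :
    beurlingPrimePow p i = beurlingInt p (Finsupp.single i.1 (i.2 + 1)) :=
  (beurlingInt_single _ _).symm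

lemma beurlingPrimePow_pos (hp : ∀ k, 0 < p k) (i : ℕ × ℕ) : 0 < beurlingPrimePow p i :=
  pow_pos (hp _) _

lemma tendsto_beurlingPrimePow_cofinite (hn : Tendsto (beurlingInt p) cofinite atTop) :
    Tendsto (beurlingPrimePow p) cofinite atTop := by
  have hinj : Function.Injective fun i : ℕ × ℕ => Finsupp.single i.1 (i.2 + 1) := by
    rintro ⟨k, j⟩ ⟨l, m⟩ hkl
    obtain ⟨rfl, hjm⟩ | ⟨hj, -⟩ := Finsupp.single_eq_single_iff _ _ _ _ |>.1 hkl
    · exact congrArg _ (Nat.succ.inj hjm)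
    · exact absurd hj j.succ_ne_zero
  exact (hn.comp hinj.tendsto_cofinite).congr fun i => (beurlingPrimePow_eq_beurlingInt i).symm

variable (hn : Tendsto (beurlingInt p) cofinite atTop)

lemma beurlingN_eq_card : beurlingN p x = (sublevelFinset hn x).card :=
  ncard_setOf_lt hn x

include hn in
lemma one_le_beurlingN (hx : 1 < x) : 1 ≤ beurlingN p x := by
  rw [beurlingN_eq_card hn, Finset.one_le_card]
  exact ⟨0, by simpa [beurlingInt] using hx⟩

lemma card_filter_le_apply (hp : ∀ k, 0 < p k) (k e : ℕ) :
    ((sublevelFinset hn x).filter (e ≤ · k)).card = beurlingN p (x / p k ^ e) := by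
  have hmul (β : ℕ →₀ ℕ) :
      beurlingInt p (β + Finsupp.single k e) < x ↔ beurlingInt p β < x / p k ^ e := by
    rw [beurlingInt_add, beurlingInt_single, lt_div_iff₀ (pow_pos (hp k) e)]
  rw [beurlingN_eq_card hn]
  symm
  refine Finset.card_nbij (· + Finsupp.single k e) (fun β hβ => ?_)
    (add_left_injective _).injOn fun α hα => ?_
  · simpa [hmul] using hβ
  · simp only [Finset.coe_filter, mem_sublevelFinset, Set.mem_ofPred_eq] at hα
    have hα_eq : α - Finsupp.single k e + Finsupp.single k e = α :=
      tsub_add_cancel_of_le (Finsupp.single_le_iff.2 hα.2)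
    exact ⟨α - Finsupp.single k e, by simpa [← hmul, hα_eq] using hα.1, hα_eq⟩

lemma log_beurlingInt_eq_sum_filter (hp : ∀ k, 1 ≤ p k) {α : ℕ →₀ ℕ} (hα : beurlingInt p α < x) :
    Real.log (beurlingInt p α) =
      ∑ i ∈ (sublevelFinset (tendsto_beurlingPrimePow_cofinite hn) x).filter
        fun i => i.2 + 1 ≤ α i.1, Real.log (p i.1) := by
  rw [log_beurlingInt fun k => (zero_lt_one.trans_le (hp k)).ne',
    Finset.sum_finset_product _ α.support fun k => Finset.range (α k)]
  · simp [Finsupp.sum]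
  · rintro ⟨k, j⟩
    simp only [Finset.mem_filter, mem_sublevelFinset, beurlingPrimePow, Finsupp.mem_support_iff,
      Finset.mem_range]
    refine ⟨fun h => ⟨by omega, h.2⟩, fun h => ⟨?_, h.2⟩⟩
    exact ((pow_le_pow_right₀ (hp k) h.2).trans (pow_le_beurlingInt hp α k)).trans_lt hα

theorem sum_log_beurlingInt (hp : ∀ k, 1 ≤ p k) (x : ℝ) :
    ∑ α ∈ sublevelFinset hn x, Real.log (beurlingInt p α) =
      ∑ i ∈ sublevelFinset (tendsto_beurlingPrimePow_cofinite hn) x,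
        Real.log (p i.1) * beurlingN p (x / beurlingPrimePow p i) := by
  have hp0 (k : ℕ) : 0 < p k := zero_lt_one.trans_le (hp k)
  rw [Finset.sum_congr rfl fun α hα =>
    log_beurlingInt_eq_sum_filter hn hp ((mem_sublevelFinset hn).1 hα)]
  simp only [Finset.sum_filter]
  rw [Finset.sum_comm]
  refine Finset.sum_congr rfl fun i _ => ?_
  rw [← Finset.sum_filter, Finset.sum_const, nsmul_eq_mul, mul_comm, card_filter_le_apply hn hp0,
    beurlingPrimePow]

/-- `K(w) = N(exp w) / exp w`, the renewal kernel: Chebyshev's identity divided by `x = exp u` is a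
convolution with `K` in the variable `log n`. -/
noncomputable def beurlingKernel (p : ℕ → ℝ) (w : ℝ) : ℝ :=
  beurlingN p (Real.exp w) / Real.exp w

include hn in
lemma exp_neg_le_beurlingKernel {L w : ℝ} (hw : w ∈ Set.Ioc 0 L) :
    Real.exp (-L) ≤ beurlingKernel p w := by
  have hN : (1 : ℝ) ≤ beurlingN p (Real.exp w) :=
    mod_cast one_le_beurlingN hn (Real.one_lt_exp_iff.2 hw.1)
  calc Real.exp (-L) ≤ Real.exp (-w) := Real.exp_le_exp.2 (neg_le_neg hw.2)
    _ = 1 / Real.exp w := by rw [Real.exp_neg, one_div]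
    _ ≤ beurlingKernel p w := div_le_div_of_nonneg_right hN (Real.exp_pos w).le

lemma integrableOn_beurlingKernel_sub {a : ℝ}
    (hL1 : IntegrableOn (fun x : ℝ => ((beurlingN p x : ℝ) - a * x) / x ^ 2) (Set.Ici 1)) :
    IntegrableOn (fun w => beurlingKernel p w - a) (Set.Ioi 0) := by
  have hexp := (integrableOn_Ici_iff_integrableOn_Ioi (by simp)).1 hL1
  rw [← Real.exp_zero, ← integrableOn_comp_exp_Ioi] at hexp
  refine hexp.congr_fun (fun w _ => ?_) measurableSet_Ioi
  have := Real.exp_ne_zero w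
  simp only [beurlingKernel, smul_eq_mul]
  field_simp

/-- The mass `log (p k) / (p k)^(j + 1)` that the measure of the renewal argument puts at the point
`log ((p k)^(j + 1))`. -/
noncomputable def beurlingWeight (p : ℕ → ℝ) (i : ℕ × ℕ) : ℝ :=
  Real.log (p i.1) / beurlingPrimePow p i

lemma beurlingWeight_nonneg (hp : ∀ k, 1 ≤ p k) (i : ℕ × ℕ) : 0 ≤ beurlingWeight p i :=
  div_nonneg (Real.log_nonneg (hp _))
    (beurlingPrimePow_pos (fun k => zero_lt_one.trans_le (hp k)) i).le

include hn in
lemma tendsto_log_beurlingPrimePow_cofinite :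
    Tendsto (fun i => Real.log (beurlingPrimePow p i)) cofinite atTop :=
  Real.tendsto_log_atTop.comp (tendsto_beurlingPrimePow_cofinite hn)

lemma sublevelConv_beurlingWeight (hp : ∀ k, 1 ≤ p k) (u : ℝ) :
    sublevelConv (tendsto_log_beurlingPrimePow_cofinite hn) (beurlingWeight p)
        (beurlingKernel p) u =
      (∑ α ∈ sublevelFinset hn (Real.exp u), Real.log (beurlingInt p α)) / Real.exp u := by
  have hpos (i : ℕ × ℕ) : 0 < beurlingPrimePow p i :=
    beurlingPrimePow_pos (fun k => zero_lt_one.trans_le (hp k)) i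
  rw [sum_log_beurlingInt hn hp, Finset.sum_div, sublevelConv]
  refine Finset.sum_congr (Finset.ext fun i => ?_) fun i _ => ?_
  · simp [Real.log_lt_iff_lt_exp (hpos i)]
  · rw [beurlingWeight, beurlingKernel, Real.exp_sub, Real.exp_log (hpos i)]
    have := (hpos i).ne'
    have := Real.exp_ne_zero u
    field_simp

theorem exists_forall_abs_sublevelConv_beurlingWeight_sub_le (hp : ∀ k, 1 ≤ p k) {a C : ℝ}
    (hO : ∀ x : ℝ, 2 ≤ x → |(beurlingN p x : ℝ) - a * x| ≤ C * x / Real.log x) :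
    ∃ C', ∀ u,
      |sublevelConv (tendsto_log_beurlingPrimePow_cofinite hn) (beurlingWeight p)
        (beurlingKernel p) u - a * max u 0| ≤ C' := by
  have hn1 : ∀ α, 1 ≤ beurlingInt p α := one_le_beurlingInt hp
  simp only [beurlingN_eq_card hn] at hO
  obtain ⟨C', hC'⟩ := exists_forall_abs_sum_log_sub_le hn hn1 hO
  refine ⟨max C' 0, fun u => ?_⟩
  rw [sublevelConv_beurlingWeight hn hp]
  rcases le_total u 0 with hu | hu
  · simp [sublevelFinset_eq_empty hn hn1 (Real.exp_le_one_iff.2 hu), hu]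
  · set T := ∑ α ∈ sublevelFinset hn (Real.exp u), Real.log (beurlingInt p α)
    have hexp := Real.exp_pos u
    have hbound : |T - a * Real.exp u * u| ≤ C' * Real.exp u := by
      simpa only [Real.log_exp] using hC' _ (Real.one_le_exp hu)
    have hdiv : T / Real.exp u - a * u = (T - a * Real.exp u * u) / Real.exp u := by
      field_simp
    rw [max_eq_left hu, hdiv, abs_div, abs_of_pos hexp, div_le_iff₀ hexp]
    refine hbound.trans ?_
    gcongr
    exact le_max_left _ _

theorem exists_forall_sum_windowFinset_beurlingWeight_le (hp : ∀ k, 1 ≤ p k) {a C : ℝ} (ha : 0 < a)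
    (hL1 : IntegrableOn (fun x : ℝ => ((beurlingN p x : ℝ) - a * x) / x ^ 2) (Set.Ici 1))
    (hO : ∀ x : ℝ, 2 ≤ x → |(beurlingN p x : ℝ) - a * x| ≤ C * x / Real.log x) (ℓ : ℝ) :
    ∃ B, ∀ y, ∑ i ∈ windowFinset (tendsto_log_beurlingPrimePow_cofinite hn) y (y + ℓ),
      beurlingWeight p i ≤ B := by
  obtain ⟨C', hC'⟩ := exists_forall_abs_sublevelConv_beurlingWeight_sub_le hn hp hO
  exact exists_forall_sum_windowFinset_le _ (beurlingWeight_nonneg hp) ha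
    (integrableOn_beurlingKernel_sub hL1)
    (fun L => ⟨Real.exp (-L), Real.exp_pos _, fun s hs => exp_neg_le_beurlingKernel hn hs⟩) hC' ℓ

/-- Chebyshev's function `θ(x) = ∑_{p k < x} log (p k)` of the prime system. -/
noncomputable def beurlingTheta (hptop : Tendsto p cofinite atTop) (x : ℝ) : ℝ :=
  ∑ k ∈ sublevelFinset hptop x, Real.log (p k)

lemma sum_windowFinset_log_le_mul (hp : ∀ k, 1 ≤ p k) (hptop : Tendsto p cofinite atTop) {x y : ℝ}
    (hy : 0 < y) (hyx : y ≤ x) :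
    ∑ k ∈ windowFinset hptop y x, Real.log (p k) ≤
      x * ∑ i ∈ windowFinset (tendsto_log_beurlingPrimePow_cofinite hn) (Real.log y) (Real.log x),
        beurlingWeight p i := by
  have hp0 (k : ℕ) : 0 < p k := zero_lt_one.trans_le (hp k)
  have hx : 0 ≤ x := hy.le.trans hyx
  have himage : (windowFinset hptop y x).image (fun k => (k, 0)) ⊆
      windowFinset (tendsto_log_beurlingPrimePow_cofinite hn) (Real.log y) (Real.log x) := by
    refine Finset.image_subset_iff.2 fun k hk => ?_
    rw [mem_windowFinset] at hk ⊢
    simpa [beurlingPrimePow] using ⟨Real.log_le_log hy hk.1, Real.log_lt_log (hp0 k) hk.2⟩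
  calc ∑ k ∈ windowFinset hptop y x, Real.log (p k)
      ≤ ∑ k ∈ windowFinset hptop y x, x * beurlingWeight p (k, 0) := by
        refine Finset.sum_le_sum fun k hk => ?_
        rw [mem_windowFinset] at hk
        rw [beurlingWeight, beurlingPrimePow, zero_add, pow_one, mul_div_left_comm]
        exact le_mul_of_one_le_right (Real.log_nonneg (hp k)) ((one_le_div (hp0 k)).2 hk.2.le)
    _ = x * ∑ i ∈ (windowFinset hptop y x).image (fun k => (k, 0)), beurlingWeight p i := by
        rw [Finset.sum_image (Prod.mk_left_injective 0).injOn, Finset.mul_sum]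
    _ ≤ x * ∑ i ∈ windowFinset (tendsto_log_beurlingPrimePow_cofinite hn) (Real.log y)
          (Real.log x), beurlingWeight p i := by
        gcongr
        exact fun i _ _ => beurlingWeight_nonneg hp i

theorem exists_forall_beurlingTheta_le (hp : ∀ k, 1 < p k) (hptop : Tendsto p cofinite atTop)
    {a C : ℝ} (ha : 0 < a)
    (hL1 : IntegrableOn (fun x : ℝ => ((beurlingN p x : ℝ) - a * x) / x ^ 2) (Set.Ici 1))
    (hO : ∀ x : ℝ, 2 ≤ x → |(beurlingN p x : ℝ) - a * x| ≤ C * x / Real.log x) :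
    ∃ B, ∀ x > 0, beurlingTheta hptop x ≤ B * x := by
  have hn := tendsto_beurlingInt_cofinite hp hptop
  have hp1 (k : ℕ) : 1 ≤ p k := (hp k).le
  obtain ⟨B, hB⟩ := exists_forall_sum_windowFinset_beurlingWeight_le hn hp1 ha hL1 hO (Real.log 2)
  have hB0 : 0 ≤ B := (Finset.sum_nonneg fun i _ => beurlingWeight_nonneg hp1 i).trans (hB 0)
  refine ⟨2 * B, fun x hx => le_two_mul_of_le_half_add hB0 (fun y _ hy1 => ?_) (fun y hy => ?_) hx⟩
  · simp [beurlingTheta, sublevelFinset_eq_empty hptop hp1 hy1]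
  · have hwindow := hB (Real.log (y / 2))
    rw [← Real.log_mul (by positivity) two_ne_zero, div_mul_cancel₀ y two_ne_zero] at hwindow
    rw [beurlingTheta, beurlingTheta,
      ← sum_sublevelFinset_add_sum_windowFinset hptop (half_le_self hy.le), mul_comm B]
    gcongr
    exact (sum_windowFinset_log_le_mul hn hp1 hptop (half_pos hy) (half_le_self hy.le)).trans
      (mul_le_mul_of_nonneg_left hwindow hy.le)

lemma card_mul_log_le_beurlingTheta (hp : ∀ k, 1 ≤ p k) (hptop : Tendsto p cofinite atTop)
    {S : Finset ℕ} (hS : S ⊆ sublevelFinset hptop x) {y : ℝ} (hy : 0 < y) (hyS : ∀ k ∈ S, y ≤ p k) :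
    S.card * Real.log y ≤ beurlingTheta hptop x := by
  rw [← nsmul_eq_mul, ← Finset.sum_const]
  exact (Finset.sum_le_sum fun k hk => Real.log_le_log hy (hyS k hk)).trans
    (Finset.sum_le_sum_of_subset_of_nonneg hS fun k _ _ => Real.log_nonneg (hp k))

lemma beurlingPi_eq_card (hptop : Tendsto p cofinite atTop) :
    beurlingPi p x = (sublevelFinset hptop x).card :=
  ncard_setOf_lt hptop x

lemma beurlingPi_mul_log_le (hptop : Tendsto p cofinite atTop) {m : ℝ} (hm1 : 1 < m)
    (hm : ∀ k, m ≤ p k) (hx : 1 ≤ x) :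
    beurlingPi p x * Real.log x ≤
      2 * (beurlingTheta hptop √x / Real.log m * √x + beurlingTheta hptop x) := by
  have hp (k : ℕ) : 1 ≤ p k := hm1.le.trans (hm k)
  have hsqrt : 1 ≤ √x := Real.one_le_sqrt.2 hx
  have hlog_sqrt : Real.log x = 2 * Real.log √x := by
    rw [Real.log_sqrt (by linarith)]
    ring
  have hsplit : beurlingPi p x = beurlingPi p √x + (windowFinset hptop √x x).card := by
    simp only [beurlingPi_eq_card hptop, Finset.card_eq_sum_ones]
    exact (sum_sublevelFinset_add_sum_windowFinset hptop
      (Real.sqrt_le_self_iff.2 (Or.inr hx)) _).symm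
  have hsmall : beurlingPi p √x ≤ beurlingTheta hptop √x / Real.log m := by
    rw [beurlingPi_eq_card hptop, le_div_iff₀ (Real.log_pos hm1)]
    exact card_mul_log_le_beurlingTheta hp hptop subset_rfl (by linarith) fun k _ => hm k
  have hlarge : (windowFinset hptop √x x).card * Real.log √x ≤ beurlingTheta hptop x :=
    card_mul_log_le_beurlingTheta hp hptop (Finset.filter_subset _ _) (by linarith)
      fun k hk => ((mem_windowFinset hptop).1 hk).1
  calc beurlingPi p x * Real.log x
      = 2 * (beurlingPi p √x * Real.log √x + (windowFinset hptop √x x).card * Real.log √x) := by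
        rw [hsplit, hlog_sqrt]
        push_cast
        ring
    _ ≤ 2 * (beurlingTheta hptop √x / Real.log m * √x + beurlingTheta hptop x) := by
        gcongr
        · exact Real.log_nonneg hsqrt
        · exact (Nat.cast_nonneg (beurlingPi p √x)).trans hsmall
        · exact Real.log_le_self (Real.sqrt_nonneg x)

end Beurling

theorem chebyshev_upper_estimate_pi_general (p : ℕ → ℝ) (hp : ∀ k, 1 < p k)
    (hptop : Tendsto p atTop atTop) (a : ℝ) (ha : 0 < a)
    (hL1 : IntegrableOn (fun x : ℝ => ((beurlingN p x : ℝ) - a * x) / x ^ 2) (Set.Ici 1))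
    (C : ℝ) (hO : ∀ x : ℝ, 2 ≤ x → |(beurlingN p x : ℝ) - a * x| ≤ C * x / Real.log x) :
    ∃ B : ℝ, ∀ x : ℝ, 2 ≤ x → (beurlingPi p x : ℝ) * Real.log x / x ≤ B := by
  rw [← Nat.cofinite_eq_atTop] at hptop
  obtain ⟨m, hm1, hm⟩ := exists_one_lt_forall_le hp hptop
  obtain ⟨B, hB⟩ := exists_forall_beurlingTheta_le hp hptop ha hL1 hO
  refine ⟨2 * (B / Real.log m + B), fun x hx => ?_⟩
  have hx0 : 0 < x := by linarith
  have hlogm : 0 < Real.log m := Real.log_pos hm1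
  rw [div_le_iff₀ hx0]
  calc beurlingPi p x * Real.log x
      ≤ 2 * (beurlingTheta hptop √x / Real.log m * √x + beurlingTheta hptop x) :=
        beurlingPi_mul_log_le hptop hm1 hm (by linarith)
    _ ≤ 2 * (B * √x / Real.log m * √x + B * x) := by
        gcongr
        · exact hB _ (Real.sqrt_pos.2 hx0)
        · exact hB x hx0
    _ = 2 * (B / Real.log m + B) * x := by
        linear_combination 2 * B / Real.log m * Real.mul_self_sqrt hx0.le

/-- **Theorem 1 (Chebyshev upper estimate for π).**
If `N(x) = ax + O(x/log x)` and `∫₁^∞ |N(x) - ax|/x² dx < ∞` for some `a > 0`,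
then `π(x) log x / x` is bounded. -/
theorem chebyshev_upper_estimate_pi
    (p : ℕ → ℝ) (hmono : Monotone p) (hp1 : 1 < p 0) (hptop : Tendsto p atTop atTop)
    (a : ℝ) (ha : 0 < a)
    (hL1 : IntegrableOn (fun x : ℝ => ((beurlingN p x : ℝ) - a * x) / x ^ 2) (Set.Ici 1))
    (C : ℝ) (hO : ∀ x : ℝ, 2 ≤ x → |(beurlingN p x : ℝ) - a * x| ≤ C * x / Real.log x) :
    ∃ B : ℝ, ∀ x : ℝ, 2 ≤ x → (beurlingPi p x : ℝ) * Real.log x / x ≤ B := by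
  exact chebyshev_upper_estimate_pi_general p (fun k => hp1.trans_le (hmono k.zero_le)) hptop a ha
    hL1 C hO
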